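/- arXiv:1004.0425 — 2 statements merged into one kernel-verified Lean document; each statement's English description precedes it below -/
import Mathlib

section
/- Let U = [[a,b],[c,d]] be a unitary 2×2 matrix, let κ₁ ∈ ℝ, and let w_t ∈ ℝ satisfy w_{t+1} + w_t = κ₁ for all t ≥ 0. Set U_t = [[a e^{i w_t}, b], [c, d e^{−i w_t}]] and R(k) = diag(e^{ik}, e^{−ik}). Then for every t ≥ 1 and every k, the product of time-evolution operators satisfies (R(k)U_{t−1})(R(k)U_{t−2})···(R(k)U₀) = R(−w_t/2) · (R(k + κ₁/2) U)^t · R(w₀/2); in particular, the Fourier transform of the walk satisfies Ψ̂_t(k) = R(−w_t/2) (R(k + κ₁/2) U)^t R(w₀/2) Ψ̂₀(k). -/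
open MeasureTheory Complex Filter

noncomputable section

/-- The Konno density function `f_K(x; a)`; only `|a|` matters. -/
def konnoDensity (a x : ℝ) : ℝ :=
  if |x| < |a| then
    Real.sqrt (1 - |a| ^ 2) / (Real.pi * (1 - x ^ 2) * Real.sqrt (|a| ^ 2 - x ^ 2))
  else 0

/-- Time evolution of a time-dependent discrete-time quantum walk on `ℤ`:
`ψ_{t+1}(x) = P_t ψ_t(x+1) + Q_t ψ_t(x-1)`, where `P_t`/`Q_t` are the top/bottom
row parts of the coin `U t`. -/
def QWEvolves (U : ℕ → Matrix (Fin 2) (Fin 2) ℂ) (ψ : ℕ → ℤ → Fin 2 → ℂ) : Prop :=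
  ∀ t : ℕ, ∀ x : ℤ,
    ψ (t + 1) x 0 = U t 0 0 * ψ t (x + 1) 0 + U t 0 1 * ψ t (x + 1) 1 ∧
    ψ (t + 1) x 1 = U t 1 0 * ψ t (x - 1) 0 + U t 1 1 * ψ t (x - 1) 1

/-- Initial state `ψ₀(0) = ᵀ(α, β)`, `ψ₀(x) = 0` for `x ≠ 0`. -/
def QWInit (α β : ℂ) (ψ : ℕ → ℤ → Fin 2 → ℂ) : Prop :=
  ψ 0 0 0 = α ∧ ψ 0 0 1 = β ∧ ∀ x : ℤ, x ≠ 0 → (ψ 0 x 0 = 0 ∧ ψ 0 x 1 = 0)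

/-- `P(X_t = x) = ‖ψ_t(x)‖²`. -/
def qwProb (ψ : ℕ → ℤ → Fin 2 → ℂ) (t : ℕ) (x : ℤ) : ℝ :=
  Complex.normSq (ψ t x 0) + Complex.normSq (ψ t x 1)

/-- The law of `X_t / t`: `μ_t = Σ_{x ∈ ℤ} P(X_t = x) δ_{x/t}`. -/
def qwMeasure (ψ : ℕ → ℤ → Fin 2 → ℂ) (t : ℕ) : Measure ℝ :=
  Measure.sum fun x : ℤ => ENNReal.ofReal (qwProb ψ t x) • Measure.dirac ((x : ℝ) / (t : ℝ))

/-- Weak convergence of `X_t / t` to the law with density `f`. -/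
def qwWeakLimit (ψ : ℕ → ℤ → Fin 2 → ℂ) (f : ℝ → ℝ) : Prop :=
  ∀ g : BoundedContinuousFunction ℝ ℝ,
    Tendsto (fun t : ℕ => ∫ y, g y ∂ qwMeasure ψ t) atTop (nhds (∫ y, g y * f y))

/-- `R(k) = diag(e^{ik}, e^{-ik})`. -/
def Rmat (k : ℝ) : Matrix (Fin 2) (Fin 2) ℂ :=
  !![Complex.exp (Complex.I * k), 0; 0, Complex.exp (-(Complex.I * k))]

/-- Ordered product `A_{t-1} ⬝ A_{t-2} ⬝ ⋯ ⬝ A₀` of a sequence of matrices. -/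
def coinProd (A : ℕ → Matrix (Fin 2) (Fin 2) ℂ) : ℕ → Matrix (Fin 2) (Fin 2) ℂ
  | 0 => 1
  | t + 1 => A t * coinProd A t

/-! The coin with phase `w` is the sandwich `R(w/2) U R(w/2)`. As `R(x + y) = R(x) R(y)`, the gauge
change `Φ_t = R(w_t/2) Ψ̂_t` turns the step `R(k) U_t` into `R(k + (w_{t+1} + w_t)/2) U`, which is
the constant matrix `R(k + κ₁/2) U`. Hence `Φ_t` evolves by the powers of that matrix. -/

theorem Rmat_zero : Rmat 0 = 1 := by
  simp [Rmat, Matrix.one_fin_two]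

theorem Rmat_add (x y : ℝ) : Rmat (x + y) = Rmat x * Rmat y := by
  simp [Rmat, mul_add, add_comm, Complex.exp_add]

theorem Rmat_neg_mul_Rmat (x : ℝ) : Rmat (-x) * Rmat x = 1 := by
  rw [← Rmat_add, neg_add_cancel, Rmat_zero]

theorem Rmat_mul_mul_Rmat (a b c d : ℂ) (x y : ℝ) :
    Rmat x * !![a, b; c, d] * Rmat y =
      !![a * exp (I * (x + y)), b * exp (I * (x - y));
         c * exp (I * (y - x)), d * exp (-(I * (x + y)))] := by
  ext i j
  fin_cases i <;> fin_cases j <;>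
    simp [Rmat, mul_add, Complex.exp_add, sub_eq_add_neg] <;> ring

theorem Rmat_half_mul_mul_Rmat_half (a b c d : ℂ) (x : ℝ) :
    Rmat (x / 2) * !![a, b; c, d] * Rmat (x / 2) =
      !![a * exp (I * x), b; c, d * exp (-(I * x))] := by
  simp [Rmat_mul_mul_Rmat]

theorem coinProd_const (M : Matrix (Fin 2) (Fin 2) ℂ) (t : ℕ) :
    coinProd (fun _ => M) t = M ^ t := by
  induction t with
  | zero => rw [coinProd, pow_zero]
  | succ t ih => rw [coinProd, ih, pow_succ']

theorem mul_coinProd_of_intertwine {A B G : ℕ → Matrix (Fin 2) (Fin 2) ℂ}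
    (hG : ∀ t, G (t + 1) * A t = B t * G t) (t : ℕ) :
    G t * coinProd A t = coinProd B t * G 0 := by
  induction t with
  | zero => simp only [coinProd, mul_one, one_mul]
  | succ t ih =>
    calc G (t + 1) * (A t * coinProd A t)
        = B t * (G t * coinProd A t) := by rw [← mul_assoc, hG, mul_assoc]
      _ = B t * coinProd B t * G 0 := by rw [ih, mul_assoc]

theorem eq_coinProd_mulVec_of_recurrence {A : ℕ → Matrix (Fin 2) (Fin 2) ℂ}
    {v : ℕ → Fin 2 → ℂ} (hv : ∀ t, v (t + 1) = (A t).mulVec (v t)) (t : ℕ) :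
    v t = (coinProd A t).mulVec (v 0) := by
  induction t with
  | zero => rw [coinProd, Matrix.one_mulVec]
  | succ t ih => rw [hv, ih, Matrix.mulVec_mulVec, coinProd]

theorem coinProd_Rmat_mul_sandwich (U : Matrix (Fin 2) (Fin 2) ℂ) {κ : ℝ} {θ : ℕ → ℝ}
    (hθ : ∀ t, θ (t + 1) + θ t = κ) (k : ℝ) (t : ℕ) :
    coinProd (fun s => Rmat k * (Rmat (θ s) * U * Rmat (θ s))) t =
      Rmat (-θ t) * (Rmat (k + κ) * U) ^ t * Rmat (θ 0) := by
  set A := fun s => Rmat k * (Rmat (θ s) * U * Rmat (θ s))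
  have hstep (s : ℕ) : Rmat (θ (s + 1)) * A s = Rmat (k + κ) * U * Rmat (θ s) := by
    have hphase : k + κ = θ (s + 1) + k + θ s := by rw [← hθ s]; ring
    simp only [A, hphase, Rmat_add, mul_assoc]
  have hgauge : Rmat (θ t) * coinProd A t = (Rmat (k + κ) * U) ^ t * Rmat (θ 0) := by
    rw [mul_coinProd_of_intertwine (G := fun s => Rmat (θ s)) hstep, coinProd_const]
  rw [mul_assoc, ← hgauge, ← mul_assoc, Rmat_neg_mul_Rmat, one_mul]

theorem case1_QW_fourier_product_general (a b c d : ℂ) {κ₁ : ℝ} {w : ℕ → ℝ}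
    (hw : ∀ t, w (t + 1) + w t = κ₁) {Useq : ℕ → Matrix (Fin 2) (Fin 2) ℂ}
    (hUseq : ∀ t, Useq t = !![a * exp (I * w t), b; c, d * exp (-(I * w t))]) (k : ℝ) :
    (∀ t, coinProd (fun s => Rmat k * Useq s) t =
      Rmat (-(w t) / 2) * (Rmat (k + κ₁ / 2) * !![a, b; c, d]) ^ t * Rmat (w 0 / 2)) ∧
    (∀ Ψhat : ℕ → Fin 2 → ℂ,
      (∀ t, Ψhat (t + 1) = (Rmat k * Useq t).mulVec (Ψhat t)) →
      ∀ t, Ψhat t =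
        (Rmat (-(w t) / 2) * (Rmat (k + κ₁ / 2) * !![a, b; c, d]) ^ t *
          Rmat (w 0 / 2)).mulVec (Ψhat 0)) := by
  have hprod (t : ℕ) : coinProd (fun s => Rmat k * Useq s) t =
      Rmat (-(w t) / 2) * (Rmat (k + κ₁ / 2) * !![a, b; c, d]) ^ t * Rmat (w 0 / 2) := by
    have hhalf (s : ℕ) : w (s + 1) / 2 + w s / 2 = κ₁ / 2 := by rw [← add_div, hw]
    simp only [hUseq, ← Rmat_half_mul_mul_Rmat_half, neg_div]
    exact coinProd_Rmat_mul_sandwich _ hhalf k t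
  refine ⟨hprod, fun Ψhat hΨ t => ?_⟩
  rw [← hprod]
  exact eq_coinProd_mulVec_of_recurrence hΨ t

/-- For the Case-1 coin `U_t = [[a e^{iw_t}, b], [c, d e^{-iw_t}]]` with
`w_{t+1} + w_t = κ₁`:
`(R(k)U_{t-1})⋯(R(k)U₀) = R(-w_t/2) (R(k+κ₁/2) U)^t R(w₀/2)` for `t ≥ 1`; in
particular the Fourier transform of the walk satisfies
`Ψ̂_t(k) = R(-w_t/2) (R(k+κ₁/2) U)^t R(w₀/2) Ψ̂₀(k)`. -/
theorem case1_QW_fourier_product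
    (a b c d : ℂ) (U : Matrix (Fin 2) (Fin 2) ℂ) (hU : U = !![a, b; c, d])
    (hunit : Matrix.conjTranspose U * U = 1)
    (κ₁ : ℝ) (w : ℕ → ℝ) (hw : ∀ t : ℕ, w (t + 1) + w t = κ₁)
    (Useq : ℕ → Matrix (Fin 2) (Fin 2) ℂ)
    (hUseq : ∀ t : ℕ, Useq t =
      !![a * Complex.exp (Complex.I * (w t)), b;
         c, d * Complex.exp (-(Complex.I * (w t)))])
    (k : ℝ) :
    (∀ t : ℕ, 1 ≤ t →
        coinProd (fun s => Rmat k * Useq s) t =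
          Rmat (-(w t) / 2) * (Rmat (k + κ₁ / 2) * U) ^ t * Rmat (w 0 / 2)) ∧
    (∀ Ψhat : ℕ → Fin 2 → ℂ,
        (∀ t : ℕ, Ψhat (t + 1) = (Rmat k * Useq t).mulVec (Ψhat t)) →
        ∀ t : ℕ, 1 ≤ t →
          Ψhat t =
            (Rmat (-(w t) / 2) * (Rmat (k + κ₁ / 2) * U) ^ t * Rmat (w 0 / 2)).mulVec
              (Ψhat 0)) := by
  obtain ⟨hprod, hΨhat⟩ := case1_QW_fourier_product_general a b c d hw hUseq k
  exact hU ▸ ⟨fun t _ => hprod t, fun Ψhat hΨ t _ => hΨhat Ψhat hΨ t⟩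
end
end

section
/- Let U = [[a,b],[c,d]] be a unitary 2×2 matrix, let κ₁ ∈ ℝ, and let w_t ∈ ℝ satisfy w_{t+1} + w_t = κ₁ for all t ≥ 0. Consider the time-dependent quantum walk on ℤ with coin sequence U_t = [[a e^{i w_t}, b], [c, d e^{−i w_t}]] and initial state ψ₀(0) = ᵀ(α, β), ψ₀(x) = 0 for x ≠ 0. Then for every t ≥ 0 and every x ∈ ℤ, P(X_t = x) = ‖ ∫₀^{2π} e^{ikx} (R(k)U)^t ᵀ(e^{i w₀/2} α, e^{−i w₀/2} β) dk/(2π) ‖²; that is, the position distribution of this time-dependent walk coincides at every time with that of the usual (time-independent) quantum walk with coin U started from the initial state ᵀ(e^{i w₀/2} α, e^{−i w₀/2} β) at the origin. -/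
open MeasureTheory Complex Filter

noncomputable section

/-!
Multiplying the amplitudes by unimodular numbers `g_t(x, j)` does not change the position
distribution. It does change the coins: if `ψ` evolves with coin entries `u_t(i, j)`, then `g ψ`
evolves with coin entries `g_{t+1}(x, i) u_t(i, j) / g_t(x ± 1, j)`, provided these do not depend on
`x`. The phases `g_t(x) = (e^{i(κ₁ x + w_t)/2}, e^{i(κ₁ x - w_t)/2})` turn the given coins into the
constant coin `U`, because `w_{t+1} = κ₁ - w_t`. The gauged walk starts at the origin from
`ᵀ(e^{i w₀/2} α, e^{-i w₀/2} β)`, and a walk is determined by its coins and its initial state, so it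
is the usual walk.
-/

namespace QWInit

variable {α β : ℂ} {φ ψ : ℕ → ℤ → Fin 2 → ℂ}

theorem apply_zero_eq (hφ : QWInit α β φ) (hψ : QWInit α β ψ) : φ 0 = ψ 0 := by
  obtain ⟨hφα, hφβ, hφ0⟩ := hφ
  obtain ⟨hψα, hψβ, hψ0⟩ := hψ
  ext x j
  obtain rfl | hx := eq_or_ne x 0
  · fin_cases j
    · exact hφα.trans hψα.symm
    · exact hφβ.trans hψβ.symm
  · fin_cases j
    · exact (hφ0 x hx).1.trans (hψ0 x hx).1.symm
    · exact (hφ0 x hx).2.trans (hψ0 x hx).2.symm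

theorem mul_left (hψ : QWInit α β ψ) (g : ℕ → ℤ → Fin 2 → ℂ) :
    QWInit (g 0 0 0 * α) (g 0 0 1 * β) (g * ψ) := by
  obtain ⟨hα, hβ, h0⟩ := hψ
  refine ⟨congrArg (g 0 0 0 * ·) hα, congrArg (g 0 0 1 * ·) hβ, fun x hx => ?_⟩
  exact ⟨mul_eq_zero_of_right _ (h0 x hx).1, mul_eq_zero_of_right _ (h0 x hx).2⟩

end QWInit

namespace QWEvolves

variable {U V : ℕ → Matrix (Fin 2) (Fin 2) ℂ} {φ ψ g : ℕ → ℤ → Fin 2 → ℂ}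

theorem eq_of_apply_zero_eq (hφ : QWEvolves U φ) (hψ : QWEvolves U ψ) (h0 : φ 0 = ψ 0) :
    φ = ψ := by
  funext t
  induction t with
  | zero => exact h0
  | succ t ih =>
    ext x j
    fin_cases j
    · exact (hφ t x).1.trans (ih ▸ (hψ t x).1.symm)
    · exact (hφ t x).2.trans (ih ▸ (hψ t x).2.symm)

theorem mul_left (hψ : QWEvolves U ψ)
    (hg₀ : ∀ t x j, g (t + 1) x 0 * U t 0 j = V t 0 j * g t (x + 1) j)
    (hg₁ : ∀ t x j, g (t + 1) x 1 * U t 1 j = V t 1 j * g t (x - 1) j) :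
    QWEvolves V (g * ψ) := by
  intro t x
  simp only [Pi.mul_apply, (hψ t x).1, (hψ t x).2, mul_add, ← mul_assoc, hg₀, hg₁, and_self]

end QWEvolves

theorem qwProb_mul_left {g : ℕ → ℤ → Fin 2 → ℂ} {t : ℕ} {x : ℤ} (hg : ∀ j, ‖g t x j‖ = 1)
    (ψ : ℕ → ℤ → Fin 2 → ℂ) : qwProb (g * ψ) t x = qwProb ψ t x := by
  simp only [qwProb, Pi.mul_apply, normSq_eq_norm_sq, norm_mul, hg, one_mul]

/-- The phases `(e^{i(κ x + w_t)/2}, e^{i(κ x - w_t)/2})` at time `t` and site `x`, by which the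
amplitudes of the walk with alternating phases are multiplied to make its coin constant. -/
def alternatingGauge (κ : ℝ) (w : ℕ → ℝ) (t : ℕ) (x : ℤ) : Fin 2 → ℂ :=
  ![exp (I * ((κ * x + w t) / 2 : ℝ)), exp (I * ((κ * x - w t) / 2 : ℝ))]

theorem norm_alternatingGauge (κ : ℝ) (w : ℕ → ℝ) (t : ℕ) (x : ℤ) (j : Fin 2) :
    ‖alternatingGauge κ w t x j‖ = 1 := by
  fin_cases j <;> exact norm_exp_I_mul_ofReal _

theorem QWEvolves.alternatingGauge_mul {a b c d : ℂ} {κ : ℝ} {w : ℕ → ℝ}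
    (hw : ∀ t, w (t + 1) + w t = κ) {ψ : ℕ → ℤ → Fin 2 → ℂ}
    (hψ : QWEvolves (fun t => !![a * exp (I * w t), b; c, d * exp (-(I * w t))]) ψ) :
    QWEvolves (fun _ => !![a, b; c, d]) (alternatingGauge κ w * ψ) := by
  have hw' (t : ℕ) : w (t + 1) = κ - w t := eq_sub_of_add_eq (hw t)
  refine hψ.mul_left (fun t x j => ?_) (fun t x j => ?_) <;> fin_cases j
  · change exp _ * (a * exp _) = a * exp _
    rw [mul_left_comm, ← exp_add, hw']
    congr 2
    push_cast
    ring
  · change exp _ * b = b * exp _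
    rw [mul_comm]
    congr 3
    rw [hw']
    push_cast
    ring
  · change exp _ * c = c * exp _
    rw [mul_comm]
    congr 3
    rw [hw']
    push_cast
    ring
  · change exp _ * (d * exp _) = d * exp _
    rw [mul_left_comm, ← exp_add, hw']
    congr 2
    push_cast
    ring

/-- The inverse Fourier transform `∫₀^{2π} e^{ikx} F(k) dk/(2π)` of a function of the wave number,
which recovers amplitudes on `ℤ`. -/
def inverseFourier (F : ℝ → ℂ) (x : ℤ) : ℂ :=
  ∫ k in (0:ℝ)..(2 * Real.pi), exp (I * k * x) * F k / (2 * Real.pi)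

theorem inverseFourier_exp_mul (F : ℝ → ℂ) (n x : ℤ) :
    inverseFourier (fun k => exp (I * k * n) * F k) x = inverseFourier F (x + n) := by
  have hexp (k : ℝ) : exp (I * k * (x + n : ℤ)) = exp (I * k * x) * exp (I * k * n) := by
    rw [← exp_add, ← mul_add, Int.cast_add]
  simp only [inverseFourier, hexp, mul_assoc (exp _)]

theorem inverseFourier_const_mul_add_const_mul {F G : ℝ → ℂ}
    (hF : IntervalIntegrable F volume 0 (2 * Real.pi))
    (hG : IntervalIntegrable G volume 0 (2 * Real.pi)) (a b : ℂ) (x : ℤ) :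
    inverseFourier (fun k => a * F k + b * G k) x =
      a * inverseFourier F x + b * inverseFourier G x := by
  have hint {H : ℝ → ℂ} (hH : IntervalIntegrable H volume 0 (2 * Real.pi)) :
      IntervalIntegrable (fun k : ℝ => exp (I * k * x) * H k / (2 * Real.pi)) volume
        0 (2 * Real.pi) :=
    (hH.continuousOn_mul (by fun_prop)).div_const _
  simp only [inverseFourier, ← intervalIntegral.integral_const_mul]
  rw [← intervalIntegral.integral_add ((hint hF).const_mul a) ((hint hG).const_mul b)]
  congr 1 with k
  ring

theorem integral_exp_I_mul_int (x : ℤ) :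
    ∫ k in (0:ℝ)..(2 * Real.pi), exp (I * k * x) = if x = 0 then (2 * Real.pi : ℂ) else 0 := by
  split_ifs with hx
  · simp [hx]
  · have hIx : I * (x : ℂ) ≠ 0 := mul_ne_zero I_ne_zero (Int.cast_ne_zero.mpr hx)
    have hperiod : exp (I * x * (2 * Real.pi : ℝ)) = 1 := by
      rw [← exp_int_mul_two_pi_mul_I x]
      push_cast
      ring_nf
    simp_rw [fun k : ℝ => mul_right_comm I (k : ℂ) x]
    rw [integral_exp_mul_complex hIx, hperiod]
    simp

theorem inverseFourier_const (z : ℂ) (x : ℤ) :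
    inverseFourier (fun _ => z) x = if x = 0 then z else 0 := by
  have hπ : (Real.pi : ℂ) ≠ 0 := ofReal_ne_zero.mpr Real.pi_ne_zero
  simp only [inverseFourier, mul_div_assoc]
  rw [intervalIntegral.integral_mul_const, integral_exp_I_mul_int, ite_mul, zero_mul]
  congr 1
  field_simp

theorem continuous_Rmat : Continuous Rmat := by
  refine continuous_matrix fun i j => ?_
  fin_cases i <;> fin_cases j
  · change Continuous fun k : ℝ => exp (I * k)
    fun_prop
  · exact continuous_const
  · exact continuous_const
  · change Continuous fun k : ℝ => exp (-(I * k))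
    fun_prop

theorem continuous_Rmat_mul_pow_mulVec (U : Matrix (Fin 2) (Fin 2) ℂ) (v : Fin 2 → ℂ) (t : ℕ) :
    Continuous fun k => ((Rmat k * U) ^ t).mulVec v := by
  have hR := continuous_Rmat
  fun_prop

-- The integer casts put both phases in the form `e^{ikn}` that `inverseFourier_exp_mul` absorbs.
theorem Rmat_mul_mulVec (k : ℝ) (U : Matrix (Fin 2) (Fin 2) ℂ) (v : Fin 2 → ℂ) :
    (Rmat k * U).mulVec v =
      ![exp (I * k * (1 : ℤ)) * (U 0 0 * v 0 + U 0 1 * v 1),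
        exp (I * k * (-1 : ℤ)) * (U 1 0 * v 0 + U 1 1 * v 1)] := by
  rw [← Matrix.mulVec_mulVec]
  ext j
  fin_cases j <;> simp [Rmat, Matrix.mulVec, dotProduct, Fin.sum_univ_two]

section UsualWalk

variable (U : Matrix (Fin 2) (Fin 2) ℂ) (v : Fin 2 → ℂ)

/-- The amplitudes of the usual walk with coin `U` started from the state `v` at the origin, in
their Fourier representation. -/
def usualWalk (t : ℕ) (x : ℤ) (j : Fin 2) : ℂ :=
  inverseFourier (fun k => ((Rmat k * U) ^ t).mulVec v j) x

theorem qwInit_usualWalk : QWInit (v 0) (v 1) (usualWalk U v) := by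
  have h (x : ℤ) (j : Fin 2) : usualWalk U v 0 x j = if x = 0 then v j else 0 := by
    simp only [usualWalk, pow_zero, Matrix.one_mulVec, inverseFourier_const]
  exact ⟨by simp [h], by simp [h], fun x hx => by simp [h, hx]⟩

theorem qwEvolves_usualWalk : QWEvolves (fun _ => U) (usualWalk U v) := by
  intro t x
  have hint (j : Fin 2) :
      IntervalIntegrable (fun k => ((Rmat k * U) ^ t).mulVec v j) volume 0 (2 * Real.pi) :=
    ((continuous_apply j).comp (continuous_Rmat_mul_pow_mulVec U v t)).intervalIntegrable _ _
  have hstep (k : ℝ) : ((Rmat k * U) ^ (t + 1)).mulVec v =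
      (Rmat k * U).mulVec (((Rmat k * U) ^ t).mulVec v) := by
    rw [Matrix.mulVec_mulVec, pow_succ']
  simp only [usualWalk, hstep, Rmat_mul_mulVec,
    ← inverseFourier_const_mul_add_const_mul (hint 0) (hint 1)]
  exact ⟨inverseFourier_exp_mul _ 1 x, inverseFourier_exp_mul _ (-1) x⟩

end UsualWalk

theorem case1_QW_equals_usual_walk_general {a b c d : ℂ} {κ : ℝ} {w : ℕ → ℝ}
    (hw : ∀ t, w (t + 1) + w t = κ) {α β : ℂ} {ψ : ℕ → ℤ → Fin 2 → ℂ} (hinit : QWInit α β ψ)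
    (hevol : QWEvolves (fun t => !![a * exp (I * w t), b; c, d * exp (-(I * w t))]) ψ)
    (t : ℕ) (x : ℤ) :
    qwProb ψ t x =
      qwProb (usualWalk !![a, b; c, d] ![exp (I * (w 0 / 2)) * α, exp (-(I * (w 0 / 2))) * β])
        t x := by
  set v : Fin 2 → ℂ := ![exp (I * (w 0 / 2)) * α, exp (-(I * (w 0 / 2))) * β] with hv
  have hstart : QWInit (v 0) (v 1) (alternatingGauge κ w * ψ) := by
    simpa [hv, alternatingGauge, neg_div] using hinit.mul_left (alternatingGauge κ w)
  have hgauge : alternatingGauge κ w * ψ = usualWalk !![a, b; c, d] v :=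
    (hevol.alternatingGauge_mul hw).eq_of_apply_zero_eq (qwEvolves_usualWalk _ v)
      (hstart.apply_zero_eq (qwInit_usualWalk _ v))
  rw [← hgauge, qwProb_mul_left (norm_alternatingGauge κ w t x)]

/-- Case 1 reduces to the usual walk: the position distribution of the walk with coin
`U_t = [[a e^{iw_t}, b], [c, d e^{-iw_t}]]`, `w_{t+1} + w_t = κ₁`, coincides at every
time with that of the usual walk with coin `U` and initial state
`ᵀ(e^{iw₀/2} α, e^{-iw₀/2} β)` at the origin. -/
theorem case1_QW_equals_usual_walk
    (a b c d : ℂ) (U : Matrix (Fin 2) (Fin 2) ℂ) (hU : U = !![a, b; c, d])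
    (hunit : Matrix.conjTranspose U * U = 1)
    (κ₁ : ℝ) (w : ℕ → ℝ) (hw : ∀ t : ℕ, w (t + 1) + w t = κ₁)
    (α β : ℂ) (hαβ : Complex.normSq α + Complex.normSq β = 1)
    (ψ : ℕ → ℤ → Fin 2 → ℂ)
    (hinit : QWInit α β ψ)
    (hevol : QWEvolves
      (fun t => !![a * Complex.exp (Complex.I * (w t)), b;
                   c, d * Complex.exp (-(Complex.I * (w t)))]) ψ) :
    ∀ t : ℕ, ∀ x : ℤ,
      qwProb ψ t x =
        Complex.normSq (∫ k in (0:ℝ)..(2 * Real.pi),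
          Complex.exp (Complex.I * k * x) *
            (((Rmat k * U) ^ t).mulVec
              ![Complex.exp (Complex.I * (w 0 / 2)) * α,
                Complex.exp (-(Complex.I * (w 0 / 2))) * β] 0) / (2 * Real.pi)) +
        Complex.normSq (∫ k in (0:ℝ)..(2 * Real.pi),
          Complex.exp (Complex.I * k * x) *
            (((Rmat k * U) ^ t).mulVec
              ![Complex.exp (Complex.I * (w 0 / 2)) * α,
                Complex.exp (-(Complex.I * (w 0 / 2))) * β] 1) / (2 * Real.pi)) := by
  subst hU
  exact case1_QW_equals_usual_walk_general hw hinit hevol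
end
end
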